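/- Let r ≥ 2 and m ≥ 1 be integers. Then there exists a real constant c > 0 (depending only on r and m) such that for every integer a ≥ 1 and every subgroup G of GL_r(ℤ/aℤ) which equals the full preimage of its image under the reduction map GL_r(ℤ/aℤ) → GL_r(ℤ/gcd(a,m)ℤ), one has c · a^(r²−1) · |Scal_G| ≤ |G| ≤ a^(r²−1) · |Scal_G|. -/

import Mathlib

/-- The subgroup of scalar matrices `{λ·I : λ ∈ Rˣ}` inside `GL n R`. -/
def scalarSubgroup (n : Type*) [DecidableEq n] [Fintype n] (R : Type*) [CommRing R] :
    Subgroup (Matrix.GeneralLinearGroup n R) :=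
  (Units.map (Matrix.scalar n).toMonoidHom).range

/-- The reduction map `GL_r(ℤ/aℤ) → GL_r(ℤ/bℤ)` for `b ∣ a`, induced by entrywise
reduction via the canonical ring homomorphism `ℤ/aℤ → ℤ/bℤ`. -/
def glReduction (r : ℕ) {a b : ℕ} (h : b ∣ a) :
    Matrix.GeneralLinearGroup (Fin r) (ZMod a) →* Matrix.GeneralLinearGroup (Fin r) (ZMod b) :=
  Matrix.GeneralLinearGroup.map (ZMod.castHom h (ZMod b))

/-!
For a finite commutative ring `R` with residue fields of cardinalities `q_M`, one `M` for each
maximal ideal, `R → ∏_M R/M` is surjective and reflects units, whence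
`|GL_n(R)| = |R|^(n²) ∏_M ∏_{i=1}^n (1 - q_M^(-i))`. The factors with `i = 1` are those of `|Rˣ|`,
so `|GL_n(R)|` is `|R|^(n²-1) |Rˣ|` up to the product of the factors with `i ≥ 2`. That product is
at most `1`, and at least `(1/2)^(n-1)` when the `q_M` are distinct, because
`∏_{k≥2} (1 - k⁻²) = 1/2`. Now `|G| |Rˣ| ≤ |GL_n(R)| |Scal_G|` for every subgroup `G`, while a full
preimage contains the kernel of reduction and so has index at most `|GL_n(S)| ≤ |S|^(n²)`, where
`S` is the ring reduced to.
-/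

open Matrix

section Groups

variable {Γ Δ : Type*} [Group Γ] [Group Δ]

lemma card_mul_card_le_card_mul_card_inf [Finite Γ] (G S : Subgroup Γ) :
    Nat.card G * Nat.card S ≤ Nat.card Γ * Nat.card (G ⊓ S : Subgroup Γ) := by
  have hG : Nat.card (G ⊓ S : Subgroup Γ) * S.relIndex G = Nat.card G := by
    rw [← Subgroup.inf_relIndex_left, ← Subgroup.relIndex_bot_left, ← Subgroup.relIndex_bot_left,
      Subgroup.relIndex_mul_relIndex _ _ _ bot_le inf_le_left]
  have hS : S.relIndex G ≤ S.index := by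
    simpa only [Subgroup.relIndex_top_right] using
      Subgroup.relIndex_le_of_le_right (le_top (a := G))
        (by simp [Subgroup.index_ne_zero_of_finite])
  calc Nat.card G * Nat.card S
      = Nat.card (G ⊓ S : Subgroup Γ) * (Nat.card S * S.relIndex G) := by rw [← hG]; ring
    _ ≤ Nat.card (G ⊓ S : Subgroup Γ) * (Nat.card S * S.index) := by gcongr
    _ = Nat.card Γ * Nat.card (G ⊓ S : Subgroup Γ) := by rw [S.card_mul_index, mul_comm]

lemma card_le_card_mul_card_of_ker_le [Finite Δ] (f : Γ →* Δ) {G : Subgroup Γ} (hG : f.ker ≤ G) :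
    Nat.card Γ ≤ Nat.card G * Nat.card Δ := by
  have hindex : G.index ∣ Nat.card Δ :=
    (Subgroup.index_dvd_of_le hG).trans (Subgroup.index_ker f ▸ f.range.card_subgroup_dvd_card)
  rw [← G.card_mul_index]
  exact Nat.mul_le_mul_left _ (Nat.le_of_dvd Nat.card_pos hindex)

end Groups

lemma card_units_mul_card_of_surjective {R S : Type*} [Ring R] [Ring S] (f : R →+* S)
    [IsLocalHom f] (hf : Function.Surjective f) :
    Nat.card Rˣ * Nat.card S = Nat.card Sˣ * Nat.card R := by
  let fUnits : Rˣ →* Sˣ := Units.map (f : R →* S)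
  let kernels : fUnits.ker ≃ (f : R →+ S).ker :=
    { toFun := fun u => ⟨u.1 - 1, by
        have hu : f u.1 = 1 := congrArg Units.val (MonoidHom.mem_ker.1 u.2)
        simp [AddMonoidHom.mem_ker, hu]⟩
      invFun := fun x =>
        have hx : f (x.1 + 1) = 1 := by
          simp [show f x.1 = 0 from AddMonoidHom.mem_ker.1 x.2]
        ⟨(isUnit_of_map_unit f (x.1 + 1) (hx ▸ isUnit_one)).unit, Units.ext hx⟩
      left_inv := fun u => by ext; simp
      right_inv := fun x => by ext; simp }
  have hunits : Nat.card fUnits.ker * Nat.card Sˣ = Nat.card Rˣ := by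
    have hsurj : Function.Surjective fUnits :=
      IsLocalRing.surjective_units_map_of_local_ringHom f hf ‹_›
    rw [← fUnits.ker.card_mul_index, Subgroup.index_ker, MonoidHom.range_eq_top.2 hsurj,
      Subgroup.card_top]
  have hring : Nat.card (f : R →+ S).ker * Nat.card S = Nat.card R := by
    rw [← AddSubgroup.card_mul_index (f : R →+ S).ker, AddSubgroup.index_ker,
      AddMonoidHom.range_eq_top.2 hf, AddSubgroup.card_top]
  rw [← hunits, ← hring, Nat.card_congr kernels]
  ring

lemma isLocalHom_mapMatrix {ι R S : Type*} [Fintype ι] [DecidableEq ι] [CommRing R] [CommRing S]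
    (f : R →+* S) [IsLocalHom f] : IsLocalHom (f.mapMatrix : Matrix ι ι R →+* Matrix ι ι S) where
  map_nonunit M hM := by
    rw [Matrix.isUnit_iff_isUnit_det, ← RingHom.map_det] at hM
    exact (Matrix.isUnit_iff_isUnit_det M).2 (isUnit_of_map_unit f _ hM)

lemma natCard_matrix (ι κ R : Type*) [Finite ι] [Finite κ] :
    Nat.card (Matrix ι κ R) = Nat.card R ^ (Nat.card ι * Nat.card κ) := by
  rw [mul_comm, pow_mul, ← Nat.card_fun, ← Nat.card_fun]
  exact Nat.card_congr Matrix.of.symm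

section LinearGroups

variable (ι : Type*) [Fintype ι] [DecidableEq ι]

lemma card_GL_mul_card_pow_of_surjective {R S : Type*} [CommRing R] [CommRing S] (f : R →+* S)
    [IsLocalHom f] (hf : Function.Surjective f) :
    Nat.card (GL ι R) * Nat.card S ^ Nat.card ι ^ 2 =
      Nat.card (GL ι S) * Nat.card R ^ Nat.card ι ^ 2 := by
  let fMatrix : Matrix ι ι R →+* Matrix ι ι S := f.mapMatrix
  have hsurj : Function.Surjective fMatrix := fun N =>
    ⟨N.map (Function.surjInv hf), by ext; simp [fMatrix, Function.surjInv_eq]⟩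
  have : IsLocalHom fMatrix := isLocalHom_mapMatrix f
  simpa only [natCard_matrix, ← sq] using card_units_mul_card_of_surjective fMatrix hsurj

lemma card_GL_pi {κ : Type*} [Fintype κ] (R : κ → Type*) [∀ k, CommRing (R k)] :
    Nat.card (GL ι (∀ k, R k)) = ∏ k, Nat.card (GL ι (R k)) := by
  rw [← Nat.card_pi]
  exact Nat.card_congr
    ((Units.mapEquiv (Matrix.piRingEquiv (β := R)).toMulEquiv).trans MulEquiv.piUnits).toEquiv

lemma card_scalarSubgroup (R : Type*) [Nonempty ι] [CommRing R] :
    Nat.card (scalarSubgroup ι R) = Nat.card Rˣ :=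
  Nat.card_congr (MonoidHom.ofInjective
    (Units.map_injective fun _ _ h => Matrix.scalar_inj.1 h)).toEquiv.symm

end LinearGroups

/-- The proportion `∏_{i=1}^n (1 - q^(-i))` of invertible matrices among all `n × n` matrices over a
field with `q` elements. -/
noncomputable def glDensity (n q : ℕ) : ℝ :=
  ∏ i ∈ Finset.range n, (1 - ((q : ℝ) ^ (i + 1))⁻¹)

lemma one_sub_inv_pow_nonneg {q : ℕ} (hq : 0 < q) (k : ℕ) : 0 ≤ 1 - ((q : ℝ) ^ k)⁻¹ :=
  sub_nonneg.2 (inv_le_one_of_one_le₀ (one_le_pow₀ (mod_cast hq)))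

lemma glDensity_eq_mul_prod (n : ℕ) [NeZero n] (q : ℕ) :
    glDensity n q =
      glDensity 1 q * ∏ i ∈ Finset.range (n - 1), (1 - ((q : ℝ) ^ (i + 2))⁻¹) := by
  obtain ⟨k, rfl⟩ := Nat.exists_eq_succ_of_ne_zero (NeZero.ne n)
  simp [glDensity, Finset.prod_range_succ', mul_comm]

lemma glDensity_nonneg (n : ℕ) {q : ℕ} (hq : 0 < q) : 0 ≤ glDensity n q :=
  Finset.prod_nonneg fun i _ => one_sub_inv_pow_nonneg hq (i + 1)

lemma glDensity_le_glDensity_one (n : ℕ) [NeZero n] {q : ℕ} (hq : 0 < q) :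
    glDensity n q ≤ glDensity 1 q := by
  rw [glDensity_eq_mul_prod n]
  exact mul_le_of_le_one_right (glDensity_nonneg 1 hq) <|
    Finset.prod_le_one (fun i _ => one_sub_inv_pow_nonneg hq (i + 2))
      fun i _ => sub_le_self _ (by positivity)

lemma le_glDensity (n : ℕ) [NeZero n] {q : ℕ} (hq : 0 < q) :
    glDensity 1 q * (1 - ((q : ℝ) ^ 2)⁻¹) ^ (n - 1) ≤ glDensity n q := by
  have hq1 : (1 : ℝ) ≤ q := mod_cast hq
  have hfactor (i : ℕ) : 1 - ((q : ℝ) ^ 2)⁻¹ ≤ 1 - ((q : ℝ) ^ (i + 2))⁻¹ := by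
    gcongr
    omega
  rw [glDensity_eq_mul_prod n, Finset.pow_eq_prod_const]
  exact mul_le_mul_of_nonneg_left
    (Finset.prod_le_prod (fun _ _ => one_sub_inv_pow_nonneg hq 2) fun i _ => hfactor i)
    (glDensity_nonneg 1 hq)

lemma card_GL_field_eq_mul_glDensity (n : ℕ) (F : Type*) [Field F] [Finite F] :
    (Nat.card (GL (Fin n) F) : ℝ) = (Nat.card F : ℝ) ^ n ^ 2 * glDensity n (Nat.card F) := by
  have := Fintype.ofFinite F
  have hq : (Fintype.card F : ℝ) ≠ 0 := mod_cast Fintype.card_ne_zero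
  rw [card_GL_field, Fin.prod_univ_eq_prod_range (fun i => Fintype.card F ^ n - Fintype.card F ^ i),
    ← Finset.prod_range_reflect, Nat.card_eq_fintype_card, sq, pow_mul, glDensity,
    Finset.pow_eq_prod_const ((_ : ℝ) ^ n), ← Finset.prod_mul_distrib, Nat.cast_prod]
  refine Finset.prod_congr rfl fun i hi => ?_
  have hi' := Finset.mem_range.1 hi
  rw [Nat.cast_sub (Nat.pow_le_pow_right Fintype.card_pos (by omega)), Nat.cast_pow, Nat.cast_pow,
    mul_sub, mul_one, Nat.sub_sub, add_comm 1, pow_sub₀ _ hq hi']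

lemma prod_Ico_one_sub_inv_sq (N : ℕ) :
    ∏ k ∈ Finset.Ico 2 (N + 2), (1 - ((k : ℝ) ^ 2)⁻¹) = (N + 2) / (2 * (N + 1)) := by
  induction N with
  | zero => simp
  | succ N ih =>
    rw [show N + 1 + 2 = N + 2 + 1 from rfl, Finset.prod_Ico_succ_top (by omega), ih]
    push_cast
    field_simp
    ring

lemma one_half_le_prod_one_sub_inv_sq {s : Finset ℕ} (hs : ∀ k ∈ s, 2 ≤ k) :
    1 / 2 ≤ ∏ k ∈ s, (1 - ((k : ℝ) ^ 2)⁻¹) := by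
  obtain ⟨N, hN⟩ : ∃ N, ∀ k ∈ s, k < N + 2 :=
    ⟨s.sup id, fun k hk => Nat.lt_add_right 1 (Nat.lt_succ_of_le (Finset.le_sup (f := id) hk))⟩
  calc (1 / 2 : ℝ) ≤ (N + 2) / (2 * (N + 1)) := by
        rw [div_le_div_iff₀ (by positivity) (by positivity)]; linarith
    _ = ∏ k ∈ Finset.Ico 2 (N + 2), (1 - ((k : ℝ) ^ 2)⁻¹) := (prod_Ico_one_sub_inv_sq N).symm
    _ ≤ ∏ k ∈ s, (1 - ((k : ℝ) ^ 2)⁻¹) :=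
        Finset.prod_le_prod_of_subset_of_le_one
          (fun k hk => Finset.mem_Ico.2 ⟨hs k hk, hN k hk⟩)
          (fun k hk => one_sub_inv_pow_nonneg (by have := Finset.mem_Ico.1 hk; omega) 2)
          fun k _ _ => sub_le_self _ (by positivity)

/-- The cardinality of the residue field `R ⧸ M` at a maximal ideal `M` (`0` if it is infinite). -/
noncomputable def residueCard {R : Type*} [CommRing R] (M : MaximalSpectrum R) : ℕ :=
  Nat.card (R ⧸ M.asIdeal)

section FiniteRing

variable {R : Type*} [CommRing R] [Finite R]

lemma one_lt_residueCard (M : MaximalSpectrum R) : 1 < residueCard M := by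
  have : Finite (R ⧸ M.asIdeal) := Finite.of_surjective _ Ideal.Quotient.mk_surjective
  have : Nontrivial (R ⧸ M.asIdeal) := Ideal.Quotient.nontrivial_iff.2 M.isMaximal.ne_top
  exact Finite.one_lt_card

lemma residueCard_pos (M : MaximalSpectrum R) : 0 < residueCard M :=
  zero_lt_one.trans (one_lt_residueCard M)

section MaximalSpectrum

variable [Fintype (MaximalSpectrum R)]

lemma card_GL_eq_mul_prod_glDensity (n : ℕ) :
    (Nat.card (GL (Fin n) R) : ℝ) =
      (Nat.card R : ℝ) ^ n ^ 2 * ∏ M : MaximalSpectrum R, glDensity n (residueCard M) := by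
  let toResidueFields : R →+* ∀ M : MaximalSpectrum R, R ⧸ M.asIdeal :=
    (RingHomClass.toRingHom (IsArtinianRing.quotNilradicalEquivPi R)).comp
      (Ideal.Quotient.mk (nilradical R))
  have hsurj : Function.Surjective toResidueFields :=
    (IsArtinianRing.quotNilradicalEquivPi R).surjective.comp Ideal.Quotient.mk_surjective
  have : IsLocalHom (Ideal.Quotient.mk (nilradical R)) :=
    ⟨fun _ => (IsNoetherianRing.isNilpotent_nilradical R).isUnit_quotient_mk_iff.1⟩
  have : IsLocalHom toResidueFields := RingHom.isLocalHom_comp _ _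
  have hresidue (M : MaximalSpectrum R) : (Nat.card (GL (Fin n) (R ⧸ M.asIdeal)) : ℝ) =
      (residueCard M : ℝ) ^ n ^ 2 * glDensity n (residueCard M) := by
    let := Ideal.Quotient.field M.asIdeal
    have : Finite (R ⧸ M.asIdeal) := Finite.of_surjective _ Ideal.Quotient.mk_surjective
    exact card_GL_field_eq_mul_glDensity n (R ⧸ M.asIdeal)
  have hcard : Nat.card (GL (Fin n) R) * ∏ M : MaximalSpectrum R, residueCard M ^ n ^ 2 =
      (∏ M : MaximalSpectrum R, Nat.card (GL (Fin n) (R ⧸ M.asIdeal))) * Nat.card R ^ n ^ 2 := by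
    simpa only [residueCard, card_GL_pi, Nat.card_pi, Nat.card_fin, Finset.prod_pow] using
      card_GL_mul_card_pow_of_surjective (Fin n) toResidueFields hsurj
  have hpos : ∏ M : MaximalSpectrum R, (residueCard M : ℝ) ^ n ^ 2 ≠ 0 :=
    Finset.prod_ne_zero_iff.2 fun M _ => pow_ne_zero _ (mod_cast (residueCard_pos M).ne')
  refine mul_right_cancel₀ hpos ?_
  calc (Nat.card (GL (Fin n) R) : ℝ) * ∏ M : MaximalSpectrum R, (residueCard M : ℝ) ^ n ^ 2
      = (∏ M : MaximalSpectrum R, (Nat.card (GL (Fin n) (R ⧸ M.asIdeal)) : ℝ)) *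
          (Nat.card R : ℝ) ^ n ^ 2 := mod_cast hcard
    _ = _ := by simp only [hresidue, Finset.prod_mul_distrib]; ring

variable (R) in
lemma card_units_eq_mul_prod_glDensity :
    (Nat.card Rˣ : ℝ) = Nat.card R * ∏ M : MaximalSpectrum R, glDensity 1 (residueCard M) := by
  rw [← Nat.card_congr (Units.mapEquiv (Matrix.uniqueRingEquiv (m := Fin 1)).toMulEquiv).toEquiv,
    card_GL_eq_mul_prod_glDensity, one_pow, pow_one]

variable (R) in
lemma card_pow_mul_card_units (n : ℕ) [NeZero n] :
    (Nat.card R : ℝ) ^ (n ^ 2 - 1) * Nat.card Rˣ =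
      (Nat.card R : ℝ) ^ n ^ 2 * ∏ M : MaximalSpectrum R, glDensity 1 (residueCard M) := by
  rw [card_units_eq_mul_prod_glDensity, ← mul_assoc, ← pow_succ,
    Nat.sub_add_cancel (Nat.pow_pos (NeZero.pos n))]

lemma le_card_GL (n : ℕ) [NeZero n] :
    (Nat.card R : ℝ) ^ (n ^ 2 - 1) * Nat.card Rˣ *
        (∏ M : MaximalSpectrum R, (1 - ((residueCard M : ℝ) ^ 2)⁻¹)) ^ (n - 1) ≤
      Nat.card (GL (Fin n) R) := by
  rw [card_GL_eq_mul_prod_glDensity, card_pow_mul_card_units, mul_assoc, ← Finset.prod_pow,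
    ← Finset.prod_mul_distrib]
  refine mul_le_mul_of_nonneg_left (Finset.prod_le_prod (fun M _ => ?_) fun M _ => ?_)
    (by positivity)
  · exact mul_nonneg (glDensity_nonneg 1 (residueCard_pos M))
      (pow_nonneg (one_sub_inv_pow_nonneg (residueCard_pos M) 2) _)
  · exact le_glDensity n (residueCard_pos M)

theorem card_inf_scalarSubgroup_mul_le {S : Type*} [CommRing S] [Finite S] {n : ℕ} [NeZero n]
    (f : R →+* S) {G : Subgroup (GL (Fin n) R)} (hG : (GeneralLinearGroup.map f).ker ≤ G) :
    (∏ M : MaximalSpectrum R, (1 - ((residueCard M : ℝ) ^ 2)⁻¹)) ^ (n - 1) *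
        (Nat.card R : ℝ) ^ (n ^ 2 - 1) *
        Nat.card (G ⊓ scalarSubgroup (Fin n) R : Subgroup (GL (Fin n) R)) ≤
      Nat.card G * (Nat.card S : ℝ) ^ n ^ 2 := by
  have hscal : Nat.card (G ⊓ scalarSubgroup (Fin n) R : Subgroup (GL (Fin n) R)) ≤ Nat.card Rˣ :=
    card_scalarSubgroup (Fin n) R ▸ Subgroup.card_le_of_le inf_le_right
  have hGL : Nat.card (GL (Fin n) S) ≤ Nat.card S ^ n ^ 2 := by
    simpa only [natCard_matrix, Nat.card_fin, ← sq] using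
      Nat.card_le_card_of_injective _ (Units.val_injective (α := Matrix (Fin n) (Fin n) S))
  have hindex : Nat.card (GL (Fin n) R) ≤ Nat.card G * Nat.card S ^ n ^ 2 :=
    (card_le_card_mul_card_of_ker_le _ hG).trans (Nat.mul_le_mul_left _ hGL)
  have hprod : 0 ≤ ∏ M : MaximalSpectrum R, (1 - ((residueCard M : ℝ) ^ 2)⁻¹) :=
    Finset.prod_nonneg fun M _ => one_sub_inv_pow_nonneg (residueCard_pos M) 2
  calc _ ≤ (∏ M : MaximalSpectrum R, (1 - ((residueCard M : ℝ) ^ 2)⁻¹)) ^ (n - 1) *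
          (Nat.card R : ℝ) ^ (n ^ 2 - 1) * Nat.card Rˣ := by gcongr
    _ = (Nat.card R : ℝ) ^ (n ^ 2 - 1) * Nat.card Rˣ *
          (∏ M : MaximalSpectrum R, (1 - ((residueCard M : ℝ) ^ 2)⁻¹)) ^ (n - 1) := by ring
    _ ≤ Nat.card (GL (Fin n) R) := le_card_GL n
    _ ≤ _ := mod_cast hindex

lemma one_half_le_prod_residueCard (hR : Function.Injective (residueCard (R := R))) :
    1 / 2 ≤ ∏ M : MaximalSpectrum R, (1 - ((residueCard M : ℝ) ^ 2)⁻¹) := by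
  classical
  rw [← Finset.prod_image (f := fun q : ℕ => 1 - ((q : ℝ) ^ 2)⁻¹) hR.injOn]
  refine one_half_le_prod_one_sub_inv_sq fun q hq => ?_
  obtain ⟨M, -, rfl⟩ := Finset.mem_image.1 hq
  exact one_lt_residueCard M

end MaximalSpectrum

lemma card_GL_le (n : ℕ) [NeZero n] :
    Nat.card (GL (Fin n) R) ≤ Nat.card R ^ (n ^ 2 - 1) * Nat.card Rˣ := by
  have := Fintype.ofFinite (MaximalSpectrum R)
  rw [← Nat.cast_le (α := ℝ), Nat.cast_mul, Nat.cast_pow, card_GL_eq_mul_prod_glDensity,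
    card_pow_mul_card_units]
  gcongr with M
  · exact fun M _ => glDensity_nonneg n (residueCard_pos M)
  · exact glDensity_le_glDensity_one n (residueCard_pos M)

theorem card_le_card_pow_mul_card_inf_scalarSubgroup {n : ℕ} [NeZero n]
    (G : Subgroup (GL (Fin n) R)) :
    Nat.card G ≤ Nat.card R ^ (n ^ 2 - 1) *
      Nat.card (G ⊓ scalarSubgroup (Fin n) R : Subgroup (GL (Fin n) R)) := by
  refine Nat.le_of_mul_le_mul_right ?_ (Nat.card_pos (α := Rˣ))
  calc Nat.card G * Nat.card Rˣ
      ≤ Nat.card (GL (Fin n) R) *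
          Nat.card (G ⊓ scalarSubgroup (Fin n) R : Subgroup (GL (Fin n) R)) := by
        rw [← card_scalarSubgroup (Fin n)]
        exact card_mul_card_le_card_mul_card_inf G _
    _ ≤ Nat.card R ^ (n ^ 2 - 1) * Nat.card Rˣ *
          Nat.card (G ⊓ scalarSubgroup (Fin n) R : Subgroup (GL (Fin n) R)) := by
        gcongr
        exact card_GL_le n
    _ = _ := by ring

theorem degree_bounds_int_general {S : Type*} [CommRing S] [Finite S] {r m : ℕ} [NeZero r]
    (hR : Function.Injective (residueCard (R := R))) (f : R →+* S) (hS : Nat.card S ≤ m)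
    (G : Subgroup (GL (Fin r) R)) (hG : (GeneralLinearGroup.map f).ker ≤ G) :
    (1 / 2) ^ (r - 1) / (m : ℝ) ^ r ^ 2 * (Nat.card R : ℝ) ^ (r ^ 2 - 1) *
        Nat.card (G ⊓ scalarSubgroup (Fin r) R : Subgroup (GL (Fin r) R)) ≤ Nat.card G ∧
      (Nat.card G : ℝ) ≤ (Nat.card R : ℝ) ^ (r ^ 2 - 1) *
        Nat.card (G ⊓ scalarSubgroup (Fin r) R : Subgroup (GL (Fin r) R)) := by
  refine ⟨?_, mod_cast card_le_card_pow_mul_card_inf_scalarSubgroup G⟩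
  have := Fintype.ofFinite (MaximalSpectrum R)
  have hm : (0 : ℝ) < m := mod_cast Nat.card_pos.trans_le hS
  rw [div_mul_eq_mul_div, div_mul_eq_mul_div, div_le_iff₀ (by positivity)]
  calc _ ≤ (∏ M : MaximalSpectrum R, (1 - ((residueCard M : ℝ) ^ 2)⁻¹)) ^ (r - 1) *
          (Nat.card R : ℝ) ^ (r ^ 2 - 1) *
          Nat.card (G ⊓ scalarSubgroup (Fin r) R : Subgroup (GL (Fin r) R)) := by
        gcongr
        exact one_half_le_prod_residueCard hR
    _ ≤ Nat.card G * (Nat.card S : ℝ) ^ r ^ 2 := card_inf_scalarSubgroup_mul_le f hG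
    _ ≤ Nat.card G * (m : ℝ) ^ r ^ 2 := by gcongr

end FiniteRing

lemma mem_ideal_zmod_iff {a : ℕ} [NeZero a] {I : Ideal (ZMod a)} {x : ZMod a} :
    x ∈ I ↔ Nat.card (ZMod a ⧸ I) ∣ x.val := by
  have horder : addOrderOf (1 : ZMod a ⧸ I) = Nat.card (ZMod a ⧸ I) :=
    addOrderOf_eq_card_of_forall_mem_zmultiples fun y => by
      obtain ⟨z, rfl⟩ := Ideal.Quotient.mk_surjective y
      refine ⟨z.val, ?_⟩
      simp only [natCast_zsmul, nsmul_one]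
      rw [← map_natCast (Ideal.Quotient.mk I), ZMod.natCast_zmod_val]
  rw [← horder, addOrderOf_dvd_iff_nsmul_eq_zero, nsmul_one, ← Ideal.Quotient.eq_zero_iff_mem,
    ← map_natCast (Ideal.Quotient.mk I), ZMod.natCast_zmod_val]

lemma ideal_zmod_eq_of_card_quotient_eq {a : ℕ} [NeZero a] {I J : Ideal (ZMod a)}
    (h : Nat.card (ZMod a ⧸ I) = Nat.card (ZMod a ⧸ J)) : I = J := by
  ext x
  rw [mem_ideal_zmod_iff, mem_ideal_zmod_iff, h]

lemma residueCard_zmod_injective (a : ℕ) [NeZero a] :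
    Function.Injective (residueCard (R := ZMod a)) := fun _ _ h =>
  MaximalSpectrum.ext (ideal_zmod_eq_of_card_quotient_eq h)

/-- Let `r ≥ 2` and `m ≥ 1`. There is a constant `c > 0`, depending only on `r` and `m`,
such that for every `a ≥ 1` and every subgroup `G ≤ GL_r(ℤ/aℤ)` which is the full preimage
of its image under reduction `GL_r(ℤ/aℤ) → GL_r(ℤ/gcd(a,m)ℤ)`, one has
`c · a^(r²−1) · |Scal_G| ≤ |G| ≤ a^(r²−1) · |Scal_G|`. -/
theorem degree_bounds_int (r m : ℕ) (hr : 2 ≤ r) (hm : 1 ≤ m) :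
    ∃ c : ℝ, 0 < c ∧
      ∀ a : ℕ, 1 ≤ a →
        ∀ G : Subgroup (Matrix.GeneralLinearGroup (Fin r) (ZMod a)),
          G = Subgroup.comap (glReduction r (Nat.gcd_dvd_left a m))
                (Subgroup.map (glReduction r (Nat.gcd_dvd_left a m)) G) →
          c * (a : ℝ) ^ (r ^ 2 - 1) *
              (Nat.card (G ⊓ scalarSubgroup (Fin r) (ZMod a) : Subgroup _) : ℝ)
            ≤ (Nat.card G : ℝ) ∧
          (Nat.card G : ℝ)
            ≤ (a : ℝ) ^ (r ^ 2 - 1) *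
              (Nat.card (G ⊓ scalarSubgroup (Fin r) (ZMod a) : Subgroup _) : ℝ) := by
  have : NeZero r := ⟨by omega⟩
  refine ⟨(1 / 2) ^ (r - 1) / (m : ℝ) ^ r ^ 2, by positivity, fun a ha G hG => ?_⟩
  have : NeZero a := ⟨by omega⟩
  have : NeZero (a.gcd m) := ⟨Nat.gcd_ne_zero_right (by omega)⟩
  have hcard : Nat.card (ZMod (a.gcd m)) ≤ m := (Nat.card_zmod _).trans_le (Nat.gcd_le_right a hm)
  have hker : (glReduction r (Nat.gcd_dvd_left a m)).ker ≤ G := hG ▸ Subgroup.ker_le_comap _ _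
  simpa only [Nat.card_zmod] using
    degree_bounds_int_general (residueCard_zmod_injective a) _ hcard G hker
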